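/- Let k = (k_1,…,k_s) be a sequence of positive integers, and let λ and λ′ be two weakly decreasing real sequences of length n = k_1+…+k_s, both having block structure k. Then there is an order isomorphism between the poset of faces of the Gelfand–Cetlin polytope P_λ and the poset of faces of P_{λ′} which preserves the dimension of faces; i.e., the face lattice of P_λ depends only on k. -/

import Mathlib

open Classical

noncomputable section

/-- Partial sums of the (0-indexed) sequence `k`: `nseq k i = k 0 + ⋯ + k (i-1)`;
so `nseq k i` is the paper's `n_i` for the sequence `(k_1, …, k_s) = (k 0, …, k (s-1))`. -/
def nseq (k : ℕ → ℕ) (i : ℕ) : ℕ := ∑ j ∈ Finset.range i, k j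

/-- The set of terminal vertices `T_k = {(n_i, n - n_i) : 0 ≤ i ≤ s}` of the ladder diagram. -/
def terminals (s : ℕ) (k : ℕ → ℕ) : Set (ℕ × ℕ) :=
  {v | ∃ i ≤ s, v = (nseq k i, nseq k s - nseq k i)}

/-- The vertex set of the ladder diagram `Γ_k`. -/
def ladderV (s : ℕ) (k : ℕ → ℕ) : Set (ℕ × ℕ) :=
  {v | ∃ t ∈ terminals s k, v.1 ≤ t.1 ∧ v.2 ≤ t.2}

/-- A unit grid step: one step to the right or one step up. -/
def gridStep (v w : ℕ × ℕ) : Prop :=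
  w = (v.1 + 1, v.2) ∨ w = (v.1, v.2 + 1)

/-- The edge set of the ladder diagram `Γ_k`. -/
def ladderE (s : ℕ) (k : ℕ → ℕ) : Set ((ℕ × ℕ) × (ℕ × ℕ)) :=
  {e | e.1 ∈ ladderV s k ∧ e.2 ∈ ladderV s k ∧ gridStep e.1 e.2}

/-- A combinatorial (directed) graph in the grid `ℤ_{≥0} × ℤ_{≥0}`,
given by a set of vertices and a set of edges. -/
@[ext] structure LGraph where
  V : Set (ℕ × ℕ)
  E : Set ((ℕ × ℕ) × (ℕ × ℕ))

/-- Subgraph inclusion order on grid graphs. -/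
instance : PartialOrder LGraph where
  le γ γ' := γ.V ⊆ γ'.V ∧ γ.E ⊆ γ'.E
  le_refl γ := ⟨subset_rfl, subset_rfl⟩
  le_trans a b c h h' := ⟨h.1.trans h'.1, h.2.trans h'.2⟩
  le_antisymm a b h h' := LGraph.ext (subset_antisymm h.1 h'.1) (subset_antisymm h.2 h'.2)

/-- The ladder diagram `Γ_k` as a grid graph. -/
def ladder (s : ℕ) (k : ℕ → ℕ) : LGraph :=
  ⟨ladderV s k, ladderE s k⟩

/-- A positive path: (the graph of) a shortest path in the ladder diagram `Γ_k`
from the origin `(0,0)` to a terminal vertex. -/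
def IsPositivePath (s : ℕ) (k : ℕ → ℕ) (p : LGraph) : Prop :=
  ∃ (m : ℕ) (f : ℕ → ℕ × ℕ),
    f 0 = (0, 0) ∧ f m ∈ terminals s k ∧
    (∀ i < m, gridStep (f i) (f (i + 1))) ∧
    (∀ i ≤ m, f i ∈ ladderV s k) ∧
    p.V = {v | ∃ i ≤ m, v = f i} ∧
    p.E = {e | ∃ i < m, e = (f i, f (i + 1))}

/-- A face of the ladder diagram `Γ_k`: a subgraph which contains all terminal
vertices and is a union of positive paths. -/
def IsLadderFace (s : ℕ) (k : ℕ → ℕ) (γ : LGraph) : Prop :=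
  terminals s k ⊆ γ.V ∧
  ∃ P : Set LGraph, (∀ p ∈ P, IsPositivePath s k p) ∧
    γ.V = ⋃ p ∈ P, LGraph.V p ∧ γ.E = ⋃ p ∈ P, LGraph.E p

/-- The dimension (first Betti number) of a face of a ladder diagram:
`|E(γ)| - |V(γ)| + 1`. -/
def ldim (γ : LGraph) : ℤ :=
  (γ.E.ncard : ℤ) - (γ.V.ncard : ℤ) + 1

/-- The index set `I = {(i,j) : i,j ≥ 1, i+j ≤ n}` of the coordinates of a
Gelfand–Cetlin pattern. -/
def GCIdx (n : ℕ) : Set (ℕ × ℕ) := {p | 1 ≤ p.1 ∧ 1 ≤ p.2 ∧ p.1 + p.2 ≤ n}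

/-- The entries of a Gelfand–Cetlin pattern `x`, extended by the boundary
condition `x_{i, n+1-i} = λ_i`. -/
def gcEntry (n : ℕ) (lam : ℕ → ℝ) (x : GCIdx n → ℝ) (p : ℕ × ℕ) : ℝ :=
  if h : p ∈ GCIdx n then x ⟨p, h⟩ else lam p.1

/-- The Gelfand–Cetlin polytope `P_λ`: the set of points `(x_{i,j})_{(i,j) ∈ I}`
with `x_{i,j+1} ≥ x_{i,j} ≥ x_{i+1,j}` for all `(i,j) ∈ I`, where
`x_{i,n+1-i} = λ_i`. -/
def GCPoly (n : ℕ) (lam : ℕ → ℝ) : Set (GCIdx n → ℝ) :=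
  {x | ∀ i j : ℕ, (i, j) ∈ GCIdx n →
    gcEntry n lam x (i, j) ≤ gcEntry n lam x (i, j + 1) ∧
    gcEntry n lam x (i + 1, j) ≤ gcEntry n lam x (i, j)}

/-- The subset of `P_λ` obtained by turning the inequalities
`x_{i,j+1} ≥ x_{i,j}` for `(i,j) ∈ SH` and `x_{i,j} ≥ x_{i+1,j}` for
`(i,j) ∈ SV` into equalities. -/
def GCFaceOf (n : ℕ) (lam : ℕ → ℝ) (SH SV : Set (ℕ × ℕ)) : Set (GCIdx n → ℝ) :=
  {x | x ∈ GCPoly n lam ∧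
    (∀ p ∈ SH, gcEntry n lam x (p.1, p.2 + 1) = gcEntry n lam x p) ∧
    (∀ p ∈ SV, gcEntry n lam x p = gcEntry n lam x (p.1 + 1, p.2))}

/-- A face of the GC polytope: a nonempty solution set of the system obtained
by replacing some of the defining inequalities by equalities. -/
def IsGCFace (n : ℕ) (lam : ℕ → ℝ) (F : Set (GCIdx n → ℝ)) : Prop :=
  F.Nonempty ∧ ∃ SH SV : Set (ℕ × ℕ), SH ⊆ GCIdx n ∧ SV ⊆ GCIdx n ∧
    F = GCFaceOf n lam SH SV

/-- The dimension of (a face of) the GC polytope: the dimension of its affine span. -/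
def GCdim (n : ℕ) (F : Set (GCIdx n → ℝ)) : ℕ :=
  Module.finrank ℝ (affineSpan ℝ F).direction

/-- `lam` (1-indexed) is weakly decreasing with block structure `k`: it is
constant on each block `(n_{i-1}, n_i]` and strictly decreases between
consecutive blocks. -/
def HasBlockStructure (s : ℕ) (k : ℕ → ℕ) (lam : ℕ → ℝ) : Prop :=
  (∀ i < s, ∀ a b : ℕ, nseq k i < a → a ≤ b → b ≤ nseq k (i + 1) → lam a = lam b) ∧
  (∀ i : ℕ, 1 ≤ i → i < s → lam (nseq k i + 1) < lam (nseq k i))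

/-- The edge set of the graph `φ(F)` associated to a subset `F` of the GC polytope. -/
def phiE (n : ℕ) (lam : ℕ → ℝ) (F : Set (GCIdx n → ℝ)) :
    Set ((ℕ × ℕ) × (ℕ × ℕ)) :=
  {e | (∃ i < n, e = ((0, i), (0, i + 1)) ∨ e = ((i, 0), (i + 1, 0))) ∨
    (∃ i j : ℕ, (i, j) ∈ GCIdx n ∧ e = ((i - 1, j), (i, j)) ∧
      ∃ x ∈ F, gcEntry n lam x (i, j) < gcEntry n lam x (i, j + 1)) ∨
    (∃ i j : ℕ, (i, j) ∈ GCIdx n ∧ e = ((i, j - 1), (i, j)) ∧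
      ∃ x ∈ F, gcEntry n lam x (i + 1, j) < gcEntry n lam x (i, j))}

/-- The graph `φ(F)`: its edges are given by `phiE` and its vertices are the
endpoints of its edges. -/
def phiGC (n : ℕ) (lam : ℕ → ℝ) (F : Set (GCIdx n → ℝ)) : LGraph where
  V := {v | ∃ e ∈ phiE n lam F, v = e.1 ∨ v = e.2}
  E := phiE n lam F

/-- The map `ψ`: for a subgraph `γ`, the set of points of `P_λ` where the
inequalities corresponding to the missing edges of `γ` become equalities. -/
def psiGC (n : ℕ) (lam : ℕ → ℝ) (γ : LGraph) : Set (GCIdx n → ℝ) :=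
  {x | x ∈ GCPoly n lam ∧ ∀ i j : ℕ, (i, j) ∈ GCIdx n →
    (((i - 1, j), (i, j)) ∉ γ.E → gcEntry n lam x (i, j) = gcEntry n lam x (i, j + 1)) ∧
    (((i, j - 1), (i, j)) ∉ γ.E → gcEntry n lam x (i, j) = gcEntry n lam x (i + 1, j))}
/-- The recursively defined point `x̄` of the proof of Lemma 2.6 (bijectivity):
`x̄_{i,j} = λ_i` if `i + j = n + 1`, and for `i + j ≤ n` it is determined from
`x̄_{i,j+1}` and `x̄_{i+1,j}` according to which of the two edges
`((i-1,j),(i,j))`, `((i,j-1),(i,j))` belong to `E`. -/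
def barX (n : ℕ) (lam : ℕ → ℝ) (E : Set ((ℕ × ℕ) × (ℕ × ℕ))) : ℕ → ℕ → ℝ
  | i, j =>
    if h1 : n + 1 ≤ i + j then lam i
    else if h2 : ((i - 1, j), (i, j)) ∈ E then
      if h3 : ((i, j - 1), (i, j)) ∈ E then
        (barX n lam E i (j + 1) + barX n lam E (i + 1) j) / 2
      else barX n lam E (i + 1) j
    else barX n lam E i (j + 1)
  termination_by i j => n + 1 - (i + j)
  decreasing_by all_goals omega

/-- `α, β : ℕ → ℕ` encode an element
`w = ((α_1,β_1),…,(α_{s-1},β_{s-1})) ∈ W_{s-1}`, with the conventions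
`α_0 = 0`, `β_0 = 1`, `α_s = 1`, `β_s = 0`. -/
def IsW (s : ℕ) (α β : ℕ → ℕ) : Prop :=
  (∀ i : ℕ, 1 ≤ i → i < s →
    (α i, β i) = (1, 0) ∨ (α i, β i) = (0, 1) ∨ (α i, β i) = (1, 1)) ∧
  α 0 = 0 ∧ β 0 = 1 ∧ α s = 1 ∧ β s = 0

/-- The edge set of the subgraph `g_w` of `Γ_k`: the horizontal edge into the
terminal vertex `v_i` when `α_i = 1` and the vertical edge into `v_i` when
`β_i = 1`. -/
def gwE (s : ℕ) (k α β : ℕ → ℕ) : Set ((ℕ × ℕ) × (ℕ × ℕ)) :=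
  {e | ∃ i ≤ s,
    (α i = 1 ∧
      e = ((nseq k i - 1, nseq k s - nseq k i), (nseq k i, nseq k s - nseq k i))) ∨
    (β i = 1 ∧
      e = ((nseq k i, nseq k s - nseq k i - 1), (nseq k i, nseq k s - nseq k i)))}

/-- The subgraph `g_w` of `Γ_k`. -/
def gwGraph (s : ℕ) (k α β : ℕ → ℕ) : LGraph where
  V := {v | ∃ e ∈ gwE s k α β, v = e.1 ∨ v = e.2}
  E := gwE s k α β

/-- The interleaved sequence `r_w(k) * w̃` of length `2s - 1` (0-indexed):
entry `2j` is `k''_{j+1} = k_{j+1} + 1 - α_{j+1} - β_j` and entry `2j + 1` is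
`w̃_{j+1} = α_{j+1} β_{j+1}`. -/
def rstar (s : ℕ) (k α β : ℕ → ℕ) (t : ℕ) : ℕ :=
  if t % 2 = 0 then k (t / 2) + 1 - α (t / 2 + 1) - β (t / 2)
  else α (t / 2 + 1) * β (t / 2 + 1)

/-- `α`-value of one of the three symbols `(1,0), (0,1), (1,1)`,
encoded as `0, 1, 2 : Fin 3` respectively. -/
def aW3 (c : Fin 3) : ℕ := if c = 1 then 0 else 1

/-- `β`-value of one of the three symbols `(1,0), (0,1), (1,1)`,
encoded as `0, 1, 2 : Fin 3` respectively. -/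
def bW3 (c : Fin 3) : ℕ := if c = 0 then 0 else 1

/-- The function `α` of the element of `W_{s-1}` encoded by
`c : Fin (s-1) → Fin 3` (with the conventions `α_0 = 0`, `α_s = 1`). -/
def alph (s : ℕ) (c : Fin (s - 1) → Fin 3) (i : ℕ) : ℕ :=
  if i = 0 then 0 else if h : i - 1 < s - 1 then aW3 (c ⟨i - 1, h⟩) else 1

/-- The function `β` of the element of `W_{s-1}` encoded by
`c : Fin (s-1) → Fin 3` (with the conventions `β_0 = 1`, `β_s = 0`). -/
def bet (s : ℕ) (c : Fin (s - 1) → Fin 3) (i : ℕ) : ℕ :=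
  if i = 0 then 1 else if h : i - 1 < s - 1 then bW3 (c ⟨i - 1, h⟩) else 0

/-- The interleaved sequence `r_w(k) * w̃` (of length `2s - 1`, 0-indexed) for
the element `w ∈ W_{s-1}` encoded by `c`. -/
def newk (s : ℕ) (c : Fin (s - 1) → Fin 3) (k : ℕ → ℕ) (t : ℕ) : ℕ :=
  if t % 2 = 0 then k (t / 2) + 1 - alph s c (t / 2 + 1) - bet s c (t / 2)
  else alph s c (t / 2 + 1) * bet s c (t / 2 + 1)

/-- `|w| = Σ_{i=1}^{s-1} α_i β_i` for the element `w ∈ W_{s-1}` encoded by `c`. -/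
def wsize (s : ℕ) (c : Fin (s - 1) → Fin 3) : ℕ :=
  ∑ j ∈ Finset.range (s - 1), alph s c (j + 1) * bet s c (j + 1)

/-- The subgraph `g_w` of `Γ_k` for the element `w ∈ W_{s-1}` encoded by `c`. -/
def gwGraph3 (s : ℕ) (k : ℕ → ℕ) (c : Fin (s - 1) → Fin 3) : LGraph :=
  gwGraph s k (alph s c) (bet s c)

/-- Union of two grid graphs (union of vertex sets and of edge sets). -/
def ugraph (γ δ : LGraph) : LGraph := ⟨γ.V ∪ δ.V, γ.E ∪ δ.E⟩

/-- The generating function `F_k(t) = Σ_{γ face of Γ_k} t^{dim γ}` of the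
`f`-vector of the ladder diagram `Γ_k`, as a formal power series in `t`:
the coefficient of `t^d` is the number of faces of `Γ_k` of dimension `d`. -/
def fpol (s : ℕ) (k : ℕ → ℕ) : PowerSeries ℤ :=
  PowerSeries.mk fun d =>
    (Set.ncard {γ : LGraph | IsLadderFace s k γ ∧ ldim γ = (d : ℤ)} : ℤ)

/-- The operator `Π_{i=1}^{s-1} (∂/∂x_i + ∂/∂x_{i+1} + t ∂/∂y_i)` applied to a
polynomial in the variables `x_1, x_2, … , y_1, y_2, …` (the variable `x_{i+1}`
is `Sum.inl i` and `y_{i+1}` is `Sum.inr i`) over `ℚ[t]`. -/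
def Lfold (s : ℕ) (f : MvPolynomial (ℕ ⊕ ℕ) (Polynomial ℚ)) :
    MvPolynomial (ℕ ⊕ ℕ) (Polynomial ℚ) :=
  (List.range (s - 1)).foldl
    (fun g i =>
      MvPolynomial.pderiv (Sum.inl i) g + MvPolynomial.pderiv (Sum.inl (i + 1)) g +
        (Polynomial.X : Polynomial ℚ) • MvPolynomial.pderiv (Sum.inr i) g) f

/-- The operator `D_w = Π_{i=1}^{s-1} (∂/∂x_i)^{1-α_i} (∂/∂x_{i+1})^{1-β_i}
(t ∂/∂y_i)^{α_i β_i}` for the element `w ∈ W_{s-1}` encoded by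
`c : Fin (s-1) → Fin 3` (`0 ↦ (1,0)`, `1 ↦ (0,1)`, `2 ↦ (1,1)`). -/
def DfoldC (s : ℕ) (c : Fin (s - 1) → Fin 3)
    (f : MvPolynomial (ℕ ⊕ ℕ) (Polynomial ℚ)) : MvPolynomial (ℕ ⊕ ℕ) (Polynomial ℚ) :=
  (List.finRange (s - 1)).foldl
    (fun g i =>
      if c i = 0 then MvPolynomial.pderiv (Sum.inl ((i : ℕ) + 1)) g
      else if c i = 1 then MvPolynomial.pderiv (Sum.inl (i : ℕ)) g
      else (Polynomial.X : Polynomial ℚ) • MvPolynomial.pderiv (Sum.inr (i : ℕ)) g) f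

/-- The operator `D_w` for the element `w ∈ W_{s-1}` encoded by `α, β : ℕ → ℕ`. -/
def DfoldW (s : ℕ) (α β : ℕ → ℕ)
    (f : MvPolynomial (ℕ ⊕ ℕ) (Polynomial ℚ)) : MvPolynomial (ℕ ⊕ ℕ) (Polynomial ℚ) :=
  (List.range (s - 1)).foldl
    (fun g j =>
      if α (j + 1) = 1 ∧ β (j + 1) = 1 then
        (Polynomial.X : Polynomial ℚ) • MvPolynomial.pderiv (Sum.inr j) g
      else if α (j + 1) = 1 then MvPolynomial.pderiv (Sum.inl (j + 1)) g
      else MvPolynomial.pderiv (Sum.inl j) g) f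

/-- Substitution of `0` for all the variables `y_j = Sum.inr j`. -/
def setYzero :
    MvPolynomial (ℕ ⊕ ℕ) (Polynomial ℚ) →ₐ[Polynomial ℚ] MvPolynomial (ℕ ⊕ ℕ) (Polynomial ℚ) :=
  MvPolynomial.aeval
    (Sum.elim (fun i => MvPolynomial.X (Sum.inl i)) fun _ => (0 : MvPolynomial (ℕ ⊕ ℕ) (Polynomial ℚ)))
end

/-!
The block structure of `λ` determines which inequalities hold between its entries, so there is an
increasing bijection `e` of the real line with `e (λ_i) = λ'_i` for all `i`. Applied to each
coordinate, `e` preserves and reflects every inequality and every equality between entries of a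
pattern; it therefore maps the face of `P_λ` cut out by a set of equalities bijectively onto the
face of `P_λ'` cut out by the same equalities.

This bijection is not affine, but the direction of the affine span of a nonempty face is the common
kernel of the linear parts of those defining functionals that vanish on the whole face. These linear
parts do not involve `λ`, and a functional vanishes on a face if and only if its counterpart
vanishes on the image.
-/

section OrderIsoExtension

variable {K : Type*} [Field K] [LinearOrder K] [IsStrictOrderedRing K]

theorem strictMono_min_add_mul_max (p : K) {c : K} (hc : 0 < c) :
    StrictMono fun t => min t p + c * max (t - p) 0 := by
  refine StrictMonoOn.Iic_union_Ici (a := p) (fun s hs t ht hst => ?_) fun s hs t ht hst => ?_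
  · simpa [Set.mem_Iic.1 hs, Set.mem_Iic.1 ht] using hst
  · simpa [Set.mem_Ici.1 hs, Set.mem_Ici.1 ht, hc] using hst

theorem rightInverse_min_add_mul_max (p : K) {c : K} (hc : 0 < c) :
    Function.RightInverse (fun t => min t p + c⁻¹ * max (t - p) 0)
      fun t => min t p + c * max (t - p) 0 := by
  intro t
  rcases le_total t p with h | h
  · simp [h]
  · have hnonneg : 0 ≤ c⁻¹ * (t - p) := mul_nonneg (inv_pos.2 hc).le (sub_nonneg.2 h)
    simp [h, hnonneg, mul_inv_cancel_left₀ hc.ne']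

/-- The increasing piecewise linear bijection of the line with slope `1` below `p` and slope `c`
above `p`; composing such maps interpolates prescribed values one at a time. -/
def stretchAbove (p c : K) (hc : 0 < c) : K ≃o K :=
  (strictMono_min_add_mul_max p hc).orderIsoOfRightInverse _ _ (rightInverse_min_add_mul_max p hc)

theorem stretchAbove_of_le {p c t : K} (hc : 0 < c) (ht : t ≤ p) : stretchAbove p c hc t = t := by
  simp [stretchAbove, ht]

theorem stretchAbove_of_ge {p c t : K} (hc : 0 < c) (ht : p ≤ t) :
    stretchAbove p c hc t = p + c * (t - p) := by
  simp [stretchAbove, ht]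

theorem exists_orderIso_fixing_Iic {p x y : K} (hx : p < x) (hy : p < y) :
    ∃ e : K ≃o K, (∀ t ≤ p, e t = t) ∧ e x = y := by
  have hx' : 0 < x - p := sub_pos.2 hx
  have hc : 0 < (y - p) / (x - p) := div_pos (sub_pos.2 hy) hx'
  refine ⟨stretchAbove p _ hc, fun t ht => stretchAbove_of_le hc ht, ?_⟩
  rw [stretchAbove_of_ge hc hx.le, div_mul_cancel₀ _ hx'.ne', add_sub_cancel]

theorem exists_orderIso_forall_mem_eq {ι : Type*} (s : Finset ι) (a b : ι → K)
    (hab : ∀ i ∈ s, ∀ j ∈ s, a i < a j ↔ b i < b j) :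
    ∃ e : K ≃o K, ∀ i ∈ s, e (a i) = b i := by
  induction s using Finset.induction_on_max_value a with
  | empty => exact ⟨OrderIso.refl K, by simp⟩
  | insert m s _ hmax ih =>
    simp only [Finset.forall_mem_insert] at hab ⊢
    obtain ⟨e, he⟩ := ih fun i hi => (hab.2 i hi).2
    by_cases hm : ∃ i ∈ s, a i = a m
    · obtain ⟨i, hi, him⟩ := hm
      have hle : b i ≤ b m := not_lt.1 fun h => him.not_gt (((hab.1).2 i hi).2 h)
      have hge : b m ≤ b i := not_lt.1 fun h => him.not_lt (((hab.2 i hi).1).2 h)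
      exact ⟨e, by rw [← him, he i hi]; exact le_antisymm hle hge, he⟩
    · have hlt : ∀ i ∈ s, a i < a m := fun i hi => (hmax i hi).lt_of_ne fun h => hm ⟨i, hi, h⟩
      obtain ⟨p, hbp, hp⟩ := Order.exists_between_finsets (s.image b) {e (a m), b m} (by
        simp only [Finset.forall_mem_image, Finset.mem_insert, Finset.mem_singleton,
          forall_eq_or_imp, forall_eq]
        exact fun i hi => ⟨he i hi ▸ e.strictMono (hlt i hi), (hab.2 i hi).1.1 (hlt i hi)⟩)
      obtain ⟨e', hfix, hm'⟩ := exists_orderIso_fixing_Iic (hp (e (a m)) (by simp))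
        (hp (b m) (by simp))
      refine ⟨e.trans e', hm', fun i hi => ?_⟩
      rw [OrderIso.trans_apply, he i hi]
      exact hfix _ (hbp _ (Finset.mem_image_of_mem b hi)).le

end OrderIsoExtension

theorem sign_sub_of_strictMono {G H : Type*} [AddCommGroup G] [LinearOrder G]
    [IsOrderedAddMonoid G] [AddCommGroup H] [LinearOrder H] [IsOrderedAddMonoid H] {g : G → H}
    (hg : StrictMono g) (a b : G) : SignType.sign (g a - g b) = SignType.sign (a - b) := by
  rcases lt_trichotomy a b with h | rfl | h
  · rw [sign_neg (sub_neg.2 h), sign_neg (sub_neg.2 (hg h))]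
  · simp
  · rw [sign_pos (sub_pos.2 h), sign_pos (sub_pos.2 (hg h))]

section Polyhedra

variable {ι K V P : Type*} [Field K] [AddCommGroup V] [Module K V] [AddTorsor V P]

theorem direction_affineSpan_le_ker_linear {F : Set P} {m : P →ᵃ[K] K} (hm : Set.EqOn m 0 F) :
    (affineSpan K F).direction ≤ LinearMap.ker m.linear := by
  rw [direction_affineSpan, vectorSpan_def, Submodule.span_le]
  rintro _ ⟨x, hx, y, hy, rfl⟩
  simp [AffineMap.linearMap_vsub, hm hx, hm hy]

variable [LinearOrder K]

/-- The face of the polyhedron `{x | ∀ r, 0 ≤ l r x}` on which the inequalities indexed by `T` are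
equalities; it may be empty. -/
def polyhedralFace (l : ι → P →ᵃ[K] K) (T : Set ι) : Set P :=
  {x | (∀ r, 0 ≤ l r x) ∧ ∀ r ∈ T, l r x = 0}

/-- The nonempty faces of the polyhedron `{x | ∀ r, 0 ≤ l r x}`. -/
def IsPolyhedralFace (l : ι → P →ᵃ[K] K) (F : Set P) : Prop :=
  F.Nonempty ∧ ∃ T, F = polyhedralFace l T

section SignPreserving

variable {V' P' : Type*} [AddCommGroup V'] [Module K V'] [AddTorsor V' P']
  {l : ι → P →ᵃ[K] K} {l' : ι → P' →ᵃ[K] K} {f : P ≃ P'}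

theorem image_polyhedralFace
    (hsign : ∀ r x, SignType.sign (l' r (f x)) = SignType.sign (l r x)) (T : Set ι) :
    f '' polyhedralFace l T = polyhedralFace l' T := by
  have nonneg_iff : ∀ r x, 0 ≤ l' r (f x) ↔ 0 ≤ l r x := fun r x => by
    rw [← sign_nonneg_iff, hsign, sign_nonneg_iff]
  have eq_zero_iff : ∀ r x, l' r (f x) = 0 ↔ l r x = 0 := fun r x => by
    rw [← sign_eq_zero_iff, hsign, sign_eq_zero_iff]
  ext y
  obtain ⟨x, rfl⟩ := f.surjective y
  simp only [f.injective.mem_set_image, polyhedralFace, Set.mem_ofPred_eq, nonneg_iff, eq_zero_iff]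

theorem isPolyhedralFace_image_iff
    (hsign : ∀ r x, SignType.sign (l' r (f x)) = SignType.sign (l r x)) (F : Set P) :
    IsPolyhedralFace l' (f '' F) ↔ IsPolyhedralFace l F := by
  simp only [IsPolyhedralFace, Set.image_nonempty, ← image_polyhedralFace hsign,
    f.injective.image_injective.eq_iff]

theorem eqOn_zero_image_iff
    (hsign : ∀ r x, SignType.sign (l' r (f x)) = SignType.sign (l r x)) (F : Set P) (r : ι) :
    Set.EqOn (l' r) 0 (f '' F) ↔ Set.EqOn (l r) 0 F := by
  have eq_zero_iff : ∀ x, l' r (f x) = 0 ↔ l r x = 0 := fun x => by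
    rw [← sign_eq_zero_iff, hsign, sign_eq_zero_iff]
  simp only [Set.EqOn, Set.forall_mem_image, Pi.zero_apply, eq_zero_iff]

end SignPreserving

variable [IsStrictOrderedRing K] {l : ι → P →ᵃ[K] K}

theorem midpoint_mem_polyhedralFace {T : Set ι} {x y : P}
    (hx : x ∈ polyhedralFace l T) (hy : y ∈ polyhedralFace l T) :
    midpoint K x y ∈ polyhedralFace l T := by
  refine ⟨fun r => ?_, fun r hr => ?_⟩
  · rw [AffineMap.map_midpoint, midpoint_eq_smul_add]
    exact smul_nonneg (by simp) (add_nonneg (hx.1 r) (hy.1 r))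
  · rw [AffineMap.map_midpoint, hx.2 r hr, hy.2 r hr, midpoint_self]

theorem exists_mem_polyhedralFace_eqOn_zero [Finite ι] {T : Set ι}
    (hne : (polyhedralFace l T).Nonempty) :
    ∃ z ∈ polyhedralFace l T, ∀ r, l r z = 0 → Set.EqOn (l r) 0 (polyhedralFace l T) := by
  suffices ∀ S : Finset ι, ∃ z ∈ polyhedralFace l T,
      ∀ r ∈ S, l r z = 0 → Set.EqOn (l r) 0 (polyhedralFace l T) by
    cases nonempty_fintype ι
    simpa using this Finset.univ
  intro S
  induction S using Finset.induction_on with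
  | empty => exact ⟨hne.some, hne.some_mem, by simp⟩
  | insert a S _ ih =>
    obtain ⟨z, hz, hzS⟩ := ih
    by_cases ha : Set.EqOn (l a) 0 (polyhedralFace l T)
    · exact ⟨z, hz, Finset.forall_mem_insert .. |>.2 ⟨fun _ => ha, hzS⟩⟩
    · obtain ⟨x, hx, hxa⟩ : ∃ x ∈ polyhedralFace l T, l a x ≠ 0 := by
        simpa [Set.EqOn] using ha
      have eq_zero_of_midpoint : ∀ r, l r (midpoint K x z) = 0 → l r x = 0 ∧ l r z = 0 := by
        intro r hr
        rw [AffineMap.map_midpoint, midpoint_eq_smul_add, smul_eq_zero_iff_right (by simp)] at hr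
        exact (add_eq_zero_iff_of_nonneg (hx.1 r) (hz.1 r)).1 hr
      refine ⟨midpoint K x z, midpoint_mem_polyhedralFace hx hz,
        Finset.forall_mem_insert .. |>.2 ⟨fun h => ?_, fun r hr h => ?_⟩⟩
      · exact absurd (eq_zero_of_midpoint a h).1 hxa
      · exact hzS r hr (eq_zero_of_midpoint r h).2

theorem exists_pos_smul_vadd_mem_polyhedralFace [Finite ι] {T : Set ι} {z : P}
    (hz : z ∈ polyhedralFace l T) {v : V} (hv : ∀ r, l r z = 0 → (l r).linear v = 0) :
    ∃ ε : K, 0 < ε ∧ ε • v +ᵥ z ∈ polyhedralFace l T := by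
  have eventually_le : ∀ᶠ t : K in Filter.atTop, ∀ r, -(l r).linear v ≤ t * l r z := by
    refine Filter.eventually_all.2 fun r => ?_
    rcases (hz.1 r).eq_or_lt with h | h
    · simp [← h, hv r h.symm]
    · exact (Filter.tendsto_id.atTop_mul_const h).eventually_ge_atTop _
  obtain ⟨t, hle, ht⟩ := (eventually_le.and (Filter.eventually_gt_atTop 0)).exists
  have value : ∀ r, l r (t⁻¹ • v +ᵥ z) = t⁻¹ * (l r).linear v + l r z := by simp
  refine ⟨t⁻¹, inv_pos.2 ht, fun r => ?_, fun r hr => ?_⟩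
  · have : l r (t⁻¹ • v +ᵥ z) = t⁻¹ * ((l r).linear v + t * l r z) := by
      rw [value]; field_simp
    rw [this]
    exact mul_nonneg (inv_pos.2 ht).le (neg_le_iff_add_nonneg'.1 (hle r))
  · rw [value, hv r (hz.2 r hr), hz.2 r hr, mul_zero, add_zero]

theorem IsPolyhedralFace.direction_affineSpan_eq_iInf_ker [Finite ι] {F : Set P}
    (hF : IsPolyhedralFace l F) :
    (affineSpan K F).direction =
      ⨅ (r) (_ : Set.EqOn (l r) 0 F), LinearMap.ker (l r).linear := by
  obtain ⟨hne, T, rfl⟩ := hF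
  refine le_antisymm (le_iInf₂ fun r hr => direction_affineSpan_le_ker_linear hr) fun v hv => ?_
  simp only [Submodule.mem_iInf, LinearMap.mem_ker] at hv
  obtain ⟨z, hz, hzero⟩ := exists_mem_polyhedralFace_eqOn_zero hne
  obtain ⟨ε, hε, hmem⟩ :=
    exists_pos_smul_vadd_mem_polyhedralFace hz fun r hr => hv r (hzero r hr)
  have hdir : ε • v ∈ (affineSpan K (polyhedralFace l T)).direction := by
    simpa [direction_affineSpan] using vsub_mem_vectorSpan K hmem hz
  exact (Submodule.smul_mem_iff _ hε.ne').1 hdir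

theorem IsPolyhedralFace.direction_affineSpan_image [Finite ι] {P' : Type*} [AddTorsor V P']
    {l' : ι → P' →ᵃ[K] K} {f : P ≃ P'}
    (hsign : ∀ r x, SignType.sign (l' r (f x)) = SignType.sign (l r x))
    (hlinear : ∀ r, (l' r).linear = (l r).linear) {F : Set P} (hF : IsPolyhedralFace l F) :
    (affineSpan K (f '' F)).direction = (affineSpan K F).direction := by
  rw [hF.direction_affineSpan_eq_iInf_ker,
    ((isPolyhedralFace_image_iff hsign F).2 hF).direction_affineSpan_eq_iInf_ker]
  simp only [eqOn_zero_image_iff hsign, hlinear]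

end Polyhedra

section BlockStructure

theorem lt_iff_exists_succ_lt_of_antitoneOn {α : Type*} [Preorder α] {f : ℕ → α} {m n : ℕ}
    (hf : AntitoneOn f (Set.Icc m n)) {i j : ℕ} (hi : i ∈ Set.Icc m n) (hj : j ∈ Set.Icc m n) :
    f j < f i ↔ ∃ l ∈ Set.Ico i j, f (l + 1) < f l := by
  constructor
  · intro hlt
    have hij : i ≤ j := (le_total i j).resolve_right fun h => (hf hj hi h).not_gt hlt
    by_contra! hno
    have hmono : MonotoneOn f (Set.Icc i j) := by
      refine monotoneOn_of_le_succ Set.ordConnected_Icc fun l _ hl hl' => ?_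
      have := hf ⟨hi.1.trans hl.1, hl.2.trans hj.2⟩ ⟨hi.1.trans hl'.1, hl'.2.trans hj.2⟩
        (Order.le_succ l)
      exact not_lt_iff_le_imp_ge.1 (hno l ⟨hl.1, Nat.lt_of_succ_le hl'.2⟩) this
    exact (hmono (Set.left_mem_Icc.2 hij) (Set.right_mem_Icc.2 hij) hij).not_gt hlt
  · rintro ⟨l, ⟨hil, hlj⟩, hlt⟩
    have hl : l ∈ Set.Icc m n := ⟨hi.1.trans hil, hlj.le.trans hj.2⟩
    have hl' : l + 1 ∈ Set.Icc m n := ⟨hl.1.trans l.le_succ, Nat.succ_le_of_lt hlj |>.trans hj.2⟩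
    exact (hf hl' hj hlj).trans_lt (hlt.trans_le (hf hi hl hil))

theorem nseq_mono (k : ℕ → ℕ) : Monotone (nseq k) := fun _ _ h =>
  Finset.sum_le_sum_of_subset (Finset.range_mono h)

theorem exists_nseq_lt_and_le {s : ℕ} {k : ℕ → ℕ} {i : ℕ} (hi : 1 ≤ i) (hin : i ≤ nseq k s) :
    ∃ t < s, nseq k t < i ∧ i ≤ nseq k (t + 1) := by
  induction s with
  | zero => simp [nseq] at hin; omega
  | succ s ih =>
    rcases le_or_gt i (nseq k s) with h | h
    · obtain ⟨t, ht, hit⟩ := ih h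
      exact ⟨t, ht.trans s.lt_succ_self, hit⟩
    · exact ⟨s, s.lt_succ_self, h, hin⟩

namespace HasBlockStructure

variable {s : ℕ} {k : ℕ → ℕ} {lam : ℕ → ℝ}

theorem succ_eq_or_succ_lt (h : HasBlockStructure s k lam) {i : ℕ} (hi : 1 ≤ i)
    (hin : i < nseq k s) :
    (lam (i + 1) = lam i ∧ i ∉ Set.range (nseq k)) ∨
      (lam (i + 1) < lam i ∧ i ∈ Set.range (nseq k)) := by
  obtain ⟨t, hts, hti, hit⟩ := exists_nseq_lt_and_le (Nat.le_add_left 1 i) hin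
  rcases (Nat.le_of_lt_succ hti).lt_or_eq with hti | rfl
  · refine .inl ⟨(h.1 t hts i (i + 1) hti i.le_succ hit).symm, ?_⟩
    rintro ⟨u, rfl⟩
    have htu : t < u := (nseq_mono k).reflect_lt hti
    have hut : u < t + 1 := (nseq_mono k).reflect_lt hit
    omega
  · have ht : 1 ≤ t := Nat.pos_of_ne_zero fun h0 => by simp [h0, nseq] at hi
    exact .inr ⟨h.2 t ht hts, t, rfl⟩

theorem antitoneOn (h : HasBlockStructure s k lam) : AntitoneOn lam (Set.Icc 1 (nseq k s)) :=
  antitoneOn_of_succ_le Set.ordConnected_Icc fun _ _ hi hi' =>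
    (h.succ_eq_or_succ_lt hi.1 hi'.2).elim (fun h => h.1.le) fun h => h.1.le

theorem lt_iff (h : HasBlockStructure s k lam) {i j : ℕ} (hi : i ∈ Set.Icc 1 (nseq k s))
    (hj : j ∈ Set.Icc 1 (nseq k s)) :
    lam j < lam i ↔ ∃ m ∈ Set.Ico i j, m ∈ Set.range (nseq k) := by
  rw [lt_iff_exists_succ_lt_of_antitoneOn h.antitoneOn hi hj]
  refine exists_congr fun m => and_congr_right fun hm => ?_
  rcases h.succ_eq_or_succ_lt (hi.1.trans hm.1) (hm.2.trans_le hj.2) with ⟨heq, hm⟩ | ⟨hlt, hm⟩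
  · simp only [heq, lt_irrefl, hm]
  · simp only [hlt, hm]

theorem exists_orderIso {lam' : ℕ → ℝ} (h : HasBlockStructure s k lam)
    (h' : HasBlockStructure s k lam') :
    ∃ e : ℝ ≃o ℝ, ∀ i ∈ Set.Icc 1 (nseq k s), e (lam i) = lam' i := by
  simpa using exists_orderIso_forall_mem_eq (Finset.Icc 1 (nseq k s)) lam lam' fun i hi j hj => by
    rw [Finset.mem_Icc] at hi hj
    rw [h.lt_iff hj hi, h'.lt_iff hj hi]

end HasBlockStructure

end BlockStructure

section GelfandCetlin

variable (n : ℕ) (lam : ℕ → ℝ)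

instance finite_GCIdx : Finite (GCIdx n) :=
  (Set.finite_Iic (n, n)).subset fun p ⟨hi, hj, hij⟩ => by
    simp only [Set.mem_Iic, Prod.le_def]
    omega

/-- The entry of a pattern at `p` as an affine functional of the pattern; see
`gcEntryAffine_apply`. -/
noncomputable def gcEntryAffine (p : ℕ × ℕ) : (GCIdx n → ℝ) →ᵃ[ℝ] ℝ :=
  if h : p ∈ GCIdx n then (LinearMap.proj ⟨p, h⟩).toAffineMap else AffineMap.const ℝ _ (lam p.1)

variable {n lam}

theorem gcEntryAffine_apply (p : ℕ × ℕ) (x : GCIdx n → ℝ) :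
    gcEntryAffine n lam p x = gcEntry n lam x p := by
  unfold gcEntryAffine gcEntry
  split_ifs <;> rfl

theorem linear_gcEntryAffine_eq (lam lam' : ℕ → ℝ) (p : ℕ × ℕ) :
    (gcEntryAffine n lam' p).linear = (gcEntryAffine n lam p).linear := by
  unfold gcEntryAffine
  split_ifs <;> rfl

variable (n lam)

/-- The nonnegative slacks whose vanishing turns the defining inequalities of the Gelfand–Cetlin
polytope into equalities: `x_{i,j+1} - x_{i,j}` is indexed by `inl (i, j)` and
`x_{i,j} - x_{i+1,j}` by `inr (i, j)`. -/
noncomputable def gcSlack : GCIdx n ⊕ GCIdx n → (GCIdx n → ℝ) →ᵃ[ℝ] ℝ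
  | .inl p => gcEntryAffine n lam (p.1.1, p.1.2 + 1) - gcEntryAffine n lam p
  | .inr p => gcEntryAffine n lam p - gcEntryAffine n lam (p.1.1 + 1, p.1.2)

variable {n lam}

theorem gcSlack_inl_apply (p : GCIdx n) (x : GCIdx n → ℝ) :
    gcSlack n lam (.inl p) x = gcEntry n lam x (p.1.1, p.1.2 + 1) - gcEntry n lam x p := by
  simp [gcSlack, gcEntryAffine_apply]

theorem gcSlack_inr_apply (p : GCIdx n) (x : GCIdx n → ℝ) :
    gcSlack n lam (.inr p) x = gcEntry n lam x p - gcEntry n lam x (p.1.1 + 1, p.1.2) := by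
  simp [gcSlack, gcEntryAffine_apply]

theorem linear_gcSlack_eq (lam lam' : ℕ → ℝ) (r : GCIdx n ⊕ GCIdx n) :
    (gcSlack n lam' r).linear = (gcSlack n lam r).linear := by
  rcases r with p | p <;> simp [gcSlack, AffineMap.sub_linear, linear_gcEntryAffine_eq lam lam']

theorem polyhedralFace_gcSlack (T : Set (GCIdx n ⊕ GCIdx n)) :
    polyhedralFace (gcSlack n lam) T =
      GCFaceOf n lam (Subtype.val '' (Sum.inl ⁻¹' T)) (Subtype.val '' (Sum.inr ⁻¹' T)) := by
  ext x
  simp only [polyhedralFace, GCFaceOf, GCPoly, Set.mem_ofPred_eq, Sum.forall, gcSlack_inl_apply,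
    gcSlack_inr_apply, sub_nonneg, sub_eq_zero, Set.forall_mem_image, Set.mem_preimage,
    Subtype.forall, Prod.forall, forall_and]

theorem isGCFace_iff_isPolyhedralFace {F : Set (GCIdx n → ℝ)} :
    IsGCFace n lam F ↔ IsPolyhedralFace (gcSlack n lam) F := by
  refine and_congr_right fun _ => ⟨?_, ?_⟩
  · rintro ⟨SH, SV, hSH, hSV, rfl⟩
    refine ⟨Sum.inl '' (Subtype.val ⁻¹' SH) ∪ Sum.inr '' (Subtype.val ⁻¹' SV), ?_⟩
    simp [polyhedralFace_gcSlack, Set.preimage_image_eq _ Sum.inl_injective,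
      Set.preimage_image_eq _ Sum.inr_injective, Set.inter_eq_right.2 hSH,
      Set.inter_eq_right.2 hSV]
  · rintro ⟨T, rfl⟩
    exact ⟨_, _, Subtype.coe_image_subset _ _, Subtype.coe_image_subset _ _,
      polyhedralFace_gcSlack T⟩

section Transport

variable {lam' : ℕ → ℝ} {g : ℝ → ℝ} {e : ℝ ≃o ℝ}

theorem gcEntry_comp (hlam : ∀ i ∈ Set.Icc 1 n, g (lam i) = lam' i) (x : GCIdx n → ℝ) {p : ℕ × ℕ}
    (hp : p.1 ∈ Set.Icc 1 n) : gcEntry n lam' (g ∘ x) p = g (gcEntry n lam x p) := by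
  unfold gcEntry
  split_ifs
  · rfl
  · exact (hlam _ hp).symm

theorem sign_gcSlack_comp (hg : StrictMono g) (hlam : ∀ i ∈ Set.Icc 1 n, g (lam i) = lam' i)
    (r : GCIdx n ⊕ GCIdx n) (x : GCIdx n → ℝ) :
    SignType.sign (gcSlack n lam' r (g ∘ x)) = SignType.sign (gcSlack n lam r x) := by
  rcases r with ⟨⟨i, j⟩, hi, hj, hij⟩ | ⟨⟨i, j⟩, hi, hj, hij⟩
  · have hi' : i ∈ Set.Icc 1 n := ⟨hi, by dsimp only at hj hij; omega⟩
    rw [gcSlack_inl_apply, gcSlack_inl_apply, gcEntry_comp hlam x hi', gcEntry_comp hlam x hi',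
      sign_sub_of_strictMono hg]
  · have hi' : i ∈ Set.Icc 1 n := ⟨hi, by dsimp only at hj hij; omega⟩
    have hi'' : i + 1 ∈ Set.Icc 1 n := ⟨by omega, by dsimp only at hj hij; omega⟩
    rw [gcSlack_inr_apply, gcSlack_inr_apply, gcEntry_comp hlam x hi', gcEntry_comp hlam x hi'',
      sign_sub_of_strictMono hg]

/-- The isomorphism of face posets induced by applying coordinatewise an increasing bijection of
the line that carries `lam` to `lam'`. -/
def gcFaceOrderIso (he : ∀ i ∈ Set.Icc 1 n, e (lam i) = lam' i) :
    {F : Set (GCIdx n → ℝ) // IsGCFace n lam F} ≃o {F : Set (GCIdx n → ℝ) // IsGCFace n lam' F} :=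
  let f : (GCIdx n → ℝ) ≃ (GCIdx n → ℝ) := (Equiv.refl _).arrowCongr e.toEquiv
  { toEquiv := f.toOrderIsoSet.toEquiv.subtypeEquiv fun F => by
      rw [isGCFace_iff_isPolyhedralFace, isGCFace_iff_isPolyhedralFace]
      exact (isPolyhedralFace_image_iff (sign_gcSlack_comp e.strictMono he) F).symm
    map_rel_iff' := f.toOrderIsoSet.map_rel_iff }

theorem GCdim_gcFaceOrderIso (he : ∀ i ∈ Set.Icc 1 n, e (lam i) = lam' i)
    (F : {F : Set (GCIdx n → ℝ) // IsGCFace n lam F}) :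
    GCdim n (gcFaceOrderIso he F).1 = GCdim n F.1 :=
  congrArg (fun W : Submodule ℝ (GCIdx n → ℝ) => Module.finrank ℝ W) <|
    (isGCFace_iff_isPolyhedralFace.1 F.2).direction_affineSpan_image
      (sign_gcSlack_comp e.strictMono he) (linear_gcSlack_eq lam lam')

end Transport

end GelfandCetlin

/-- Remark 1.11. If `λ` and `λ'` both have block structure
`k`, then the face lattices of the Gelfand–Cetlin polytopes `P_λ` and `P_λ'`
are isomorphic by a dimension-preserving order isomorphism; i.e. the face
lattice of `P_λ` depends only on `k`. -/
theorem gcFaceLattice_depends_only_on_k (s : ℕ) (hs : 1 ≤ s) (k : ℕ → ℕ)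
    (hk : ∀ i < s, 0 < k i) (lam lam' : ℕ → ℝ)
    (hlam : HasBlockStructure s k lam) (hlam' : HasBlockStructure s k lam') :
    ∃ Φ : {F : Set (GCIdx (nseq k s) → ℝ) // IsGCFace (nseq k s) lam F} →
          {F : Set (GCIdx (nseq k s) → ℝ) // IsGCFace (nseq k s) lam' F},
      Function.Bijective Φ ∧
      (∀ F F', F.1 ⊆ F'.1 ↔ (Φ F).1 ⊆ (Φ F').1) ∧
      (∀ F, GCdim (nseq k s) F.1 = GCdim (nseq k s) (Φ F).1) := by
  obtain ⟨e, he⟩ := hlam.exists_orderIso hlam'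
  let Φ := gcFaceOrderIso he
  exact ⟨Φ, Φ.bijective, fun F F' => Φ.le_iff_le.symm, fun F => (GCdim_gcFaceOrderIso he F).symm⟩
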